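/- arXiv:1409.6011 — 5 statements merged into one kernel-verified Lean document; each statement's English description precedes it below -/
import Mathlib

section
/- Let n ≥ 1, let C > 0, and let K ⊆ ℝⁿ be a convex body with K ⊆ C√n·B_n. For σ > 0 define F(s) = ∫_K exp(−‖x‖²/(2s)) dx for s > 0. Then for every α with 0 < α ≤ 1/2, F(σ²/(1+α)) · F(σ²/(1−α)) ≤ exp(2·C²·α²·n/σ²) · F(σ²)². -/
open MeasureTheory

/-!
The function `(x, s) ↦ ‖x‖² / s` is jointly convex on `s > 0`, so by the
Prékopa–Leindler inequality `F` is log-concave in the variance; at the midpoint of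
`σ² / (1 + α)` and `σ² / (1 - α)` this reads
`F(σ² / (1 + α)) · F(σ² / (1 - α)) ≤ F(σ² / (1 - α²))²`.
On a ball of radius `R`, lowering the variance from `σ² / (1 - α²)` to `σ²` changes the integrand
by a factor of at most `exp(α² R² / (2σ²))`.

Prékopa–Leindler itself is proved on the line from `|A| + |B| ≤ |A + B|` applied to superlevel
sets, and passes to products by Fubini.
-/

open Set
open scoped ENNReal Pointwise

section BrunnMinkowski

variable {A B : Set ℝ}

theorem volume_add_volume_le_volume_add_of_isCompact (hA : IsCompact A) (hB : IsCompact B)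
    (hA₀ : A.Nonempty) (hB₀ : B.Nonempty) : volume A + volume B ≤ volume (A + B) := by
  obtain ⟨a, ha, ha_max⟩ := hA.exists_isGreatest hA₀
  obtain ⟨b, hb, hb_min⟩ := hB.exists_isLeast hB₀
  -- The translates `b + A` and `a + B` of the two sets lie in `A + B` and meet only at `a + b`.
  have h_disj : AEDisjoint volume (b +ᵥ A) (a +ᵥ B) := by
    refine measure_mono_null (t := {a + b}) ?_ (by simp)
    rintro _ ⟨⟨x, hx, rfl⟩, ⟨y, hy, hxy⟩⟩
    have hxa := ha_max hx
    have hby := hb_min hy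
    simp only [vadd_eq_add, mem_singleton_iff] at hxy ⊢
    linarith
  have h_sub : (b +ᵥ A) ∪ (a +ᵥ B) ⊆ A + B := by
    rintro _ (⟨x, hx, rfl⟩ | ⟨y, hy, rfl⟩)
    · exact ⟨x, hx, b, hb, add_comm _ _⟩
    · exact ⟨a, ha, y, hy, rfl⟩
  calc volume A + volume B = volume (b +ᵥ A) + volume (a +ᵥ B) := by simp only [measure_vadd]
    _ = volume ((b +ᵥ A) ∪ (a +ᵥ B)) :=
        (measure_union₀ (hB.vadd a).measurableSet.nullMeasurableSet h_disj).symm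
    _ ≤ volume (A + B) := measure_mono h_sub

theorem volume_add_volume_le_volume_add (hA : MeasurableSet A) (hB : MeasurableSet B)
    (hA₀ : A.Nonempty) (hB₀ : B.Nonempty) : volume A + volume B ≤ volume (A + B) := by
  obtain ⟨a, ha⟩ := hA₀
  obtain ⟨b, hb⟩ := hB₀
  rw [hA.measure_eq_iSup_isCompact, hB.measure_eq_iSup_isCompact]
  simp only [iSup_and']
  refine ENNReal.biSup_add_biSup_le' ⟨∅, by simp⟩ ⟨∅, by simp⟩ ?_
  rintro K ⟨hKA, hK⟩ L ⟨hLB, hL⟩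
  calc volume K + volume L ≤ volume (insert a K) + volume (insert b L) := by
        gcongr <;> exact subset_insert _ _
    _ ≤ volume (insert a K + insert b L) :=
        volume_add_volume_le_volume_add_of_isCompact (hK.insert a) (hL.insert b)
          (insert_nonempty _ _) (insert_nonempty _ _)
    _ ≤ volume (A + B) := by
        gcongr <;> exact insert_subset ‹_› ‹_›

theorem ofReal_mul_volume_add_le_volume_smul_add_smul (hA : MeasurableSet A) (hB : MeasurableSet B)
    (hA₀ : A.Nonempty) (hB₀ : B.Nonempty) {a b : ℝ} (ha : 0 < a) (hb : 0 < b) :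
    ENNReal.ofReal a * volume A + ENNReal.ofReal b * volume B ≤ volume (a • A + b • B) := by
  have volume_smul {c : ℝ} (hc : 0 < c) (S : Set ℝ) :
      volume (c • S) = ENNReal.ofReal c * volume S := by
    simp [Measure.addHaar_smul, abs_of_pos hc]
  rw [← volume_smul ha, ← volume_smul hb]
  exact volume_add_volume_le_volume_add (hA.const_smul₀ a) (hB.const_smul₀ b)
    hA₀.smul_set hB₀.smul_set

end BrunnMinkowski

section LayerCake

theorem volume_setOf_pos_and_ofReal_lt (c : ℝ≥0∞) :
    volume {t : ℝ | 0 < t ∧ ENNReal.ofReal t < c} = c := by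
  induction c with
  | top => simpa [Ioi] using Real.volume_Ioi (a := 0)
  | coe c =>
    have h_Ioo : {t : ℝ | 0 < t ∧ ENNReal.ofReal t < c} = Ioo 0 (c : ℝ) := by
      ext t
      refine and_congr_right fun ht ↦ ?_
      rw [← ENNReal.ofReal_coe_nnreal, ENNReal.ofReal_lt_ofReal_iff_of_nonneg ht.le]
    simp [h_Ioo]

theorem lintegral_eq_lintegral_measure_ofReal_lt {α : Type*} [MeasurableSpace α] (μ : Measure α)
    [SFinite μ] {f : α → ℝ≥0∞} (hf : Measurable f) :
    ∫⁻ x, f x ∂μ = ∫⁻ t in Ioi (0 : ℝ), μ {x | ENNReal.ofReal t < f x} := by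
  let S : Set (α × ℝ) := {p | 0 < p.2 ∧ ENNReal.ofReal p.2 < f p.1}
  have hS : MeasurableSet S :=
    (measurableSet_lt measurable_const measurable_snd).inter
      (measurableSet_lt measurable_snd.ennreal_ofReal (hf.comp measurable_fst))
  calc ∫⁻ x, f x ∂μ = ∫⁻ x, volume (Prod.mk x ⁻¹' S) ∂μ :=
        lintegral_congr fun x ↦ (volume_setOf_pos_and_ofReal_lt (f x)).symm
    _ = ∫⁻ t, μ ((·, t) ⁻¹' S) := by
        rw [← Measure.prod_apply hS, Measure.prod_apply_symm hS]
    _ = ∫⁻ t in Ioi (0 : ℝ), μ {x | ENNReal.ofReal t < f x} := by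
        rw [← lintegral_indicator measurableSet_Ioi]
        refine lintegral_congr fun t ↦ ?_
        by_cases ht : 0 < t <;> simp [S, ht]

end LayerCake

section WeightedMeans

variable {a b : ℝ}

theorem ennreal_rpow_mul_rpow_le_weighted_add (ha : 0 < a) (hb : 0 < b) (hab : a + b = 1)
    (u v : ℝ≥0∞) : u ^ a * v ^ b ≤ ENNReal.ofReal a * u + ENNReal.ofReal b * v := by
  have h_young := ENNReal.young_inequality (u ^ a) (v ^ b) (.inv_inv ha hb hab)
  rwa [ENNReal.rpow_rpow_inv ha.ne', ENNReal.rpow_rpow_inv hb.ne', ENNReal.ofReal_inv_of_pos ha,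
    ENNReal.ofReal_inv_of_pos hb, div_eq_mul_inv, div_eq_mul_inv, inv_inv, inv_inv, mul_comm u,
    mul_comm v] at h_young

theorem ennreal_rpow_mul_rpow_self (ha : 0 ≤ a) (hb : 0 ≤ b) (hab : a + b = 1) (u : ℝ≥0∞) :
    u ^ a * u ^ b = u := by
  rw [← ENNReal.rpow_add_of_nonneg _ _ ha hb, hab, ENNReal.rpow_one]

theorem ennreal_min_le_rpow_mul_rpow (ha : 0 ≤ a) (hb : 0 ≤ b) (hab : a + b = 1) (u v : ℝ≥0∞) :
    min u v ≤ u ^ a * v ^ b := by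
  calc min u v = min u v ^ a * min u v ^ b := (ennreal_rpow_mul_rpow_self ha hb hab _).symm
    _ ≤ u ^ a * v ^ b := by
        gcongr
        exacts [min_le_left _ _, min_le_right _ _]

end WeightedMeans

/-- The measure `μ` satisfies the Prékopa–Leindler inequality, for all weights `a + b = 1`. This is
the functional form of log-concavity of `μ`; it is stated for `ℝ≥0∞`-valued functions so that no
integrability enters. -/
def IsPrekopaLeindler {E : Type*} [AddCommGroup E] [Module ℝ E] [MeasurableSpace E]
    (μ : Measure E) : Prop :=
  ∀ ⦃a b : ℝ⦄, 0 < a → 0 < b → a + b = 1 →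
    ∀ ⦃f g h : E → ℝ≥0∞⦄, Measurable f → Measurable g → Measurable h →
      (∀ x y, f x ^ a * g y ^ b ≤ h (a • x + b • y)) →
      (∫⁻ x, f x ∂μ) ^ a * (∫⁻ x, g x ∂μ) ^ b ≤ ∫⁻ x, h x ∂μ

section Line

variable {f g h : ℝ → ℝ≥0∞} {a b : ℝ}

theorem weighted_lintegral_add_le_of_min_le (hf : Measurable f) (hg : Measurable g)
    (hh : Measurable h) (ha : 0 < a) (hb : 0 < b) (h_sup : ⨆ x, f x = ⨆ x, g x)
    (hfgh : ∀ x y, min (f x) (g y) ≤ h (a • x + b • y)) :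
    ENNReal.ofReal a * (∫⁻ x, f x) + ENNReal.ofReal b * (∫⁻ x, g x) ≤ ∫⁻ x, h x := by
  simp only [lintegral_eq_lintegral_measure_ofReal_lt volume hf,
    lintegral_eq_lintegral_measure_ofReal_lt volume hg,
    lintegral_eq_lintegral_measure_ofReal_lt volume hh]
  rw [← lintegral_const_mul' _ _ ENNReal.ofReal_ne_top,
    ← lintegral_const_mul' _ _ ENNReal.ofReal_ne_top]
  refine (le_lintegral_add _ _).trans (lintegral_mono fun t ↦ ?_)
  set τ := ENNReal.ofReal t
  rcases lt_or_ge τ (⨆ x, f x) with hτ | hτ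
  · have hf_ne : {x | τ < f x}.Nonempty := lt_iSup_iff.1 hτ
    have hg_ne : {x | τ < g x}.Nonempty := lt_iSup_iff.1 (hτ.trans_eq h_sup)
    have h_sub : a • {x | τ < f x} + b • {x | τ < g x} ⊆ {x | τ < h x} := by
      rintro _ ⟨_, ⟨x, hx, rfl⟩, _, ⟨y, hy, rfl⟩, rfl⟩
      exact (lt_min hx hy).trans_le (hfgh x y)
    exact (ofReal_mul_volume_add_le_volume_smul_add_smul (measurableSet_lt measurable_const hf)
      (measurableSet_lt measurable_const hg) hf_ne hg_ne ha hb).trans (measure_mono h_sub)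
  · have hf_le (x : ℝ) : f x ≤ τ := (le_iSup f x).trans hτ
    have hg_le (x : ℝ) : g x ≤ τ := (le_iSup g x).trans (h_sup ▸ hτ)
    simp [(hf_le _).not_gt, (hg_le _).not_gt]

theorem lintegral_rpow_mul_lintegral_rpow_le_of_iSup_ne_top (hf : Measurable f)
    (hg : Measurable g) (hh : Measurable h) (ha : 0 < a) (hb : 0 < b) (hab : a + b = 1)
    (hf_sup : ⨆ x, f x ≠ ∞) (hg_sup : ⨆ x, g x ≠ ∞)
    (hfgh : ∀ x y, f x ^ a * g y ^ b ≤ h (a • x + b • y)) :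
    (∫⁻ x, f x) ^ a * (∫⁻ x, g x) ^ b ≤ ∫⁻ x, h x := by
  set A := ⨆ x, f x
  set B := ⨆ x, g x
  rcases eq_or_ne A 0 with hA₀ | hA₀
  · simp [ENNReal.iSup_eq_zero.1 hA₀, ha]
  rcases eq_or_ne B 0 with hB₀ | hB₀
  · simp [ENNReal.iSup_eq_zero.1 hB₀, hb]
  have scale_mean (u v : ℝ≥0∞) :
      (A⁻¹ * u) ^ a * (B⁻¹ * v) ^ b = (A⁻¹ ^ a * B⁻¹ ^ b) * (u ^ a * v ^ b) := by
    rw [ENNReal.mul_rpow_of_nonneg _ _ ha.le, ENNReal.mul_rpow_of_nonneg _ _ hb.le,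
      mul_mul_mul_comm]
  set c := A⁻¹ ^ a * B⁻¹ ^ b
  have hc₀ : c ≠ 0 := by simp [c, A, B, hf_sup, hg_sup, ha.le, hb.le]
  have hc : c ≠ ∞ := by finiteness
  have h_sup : ⨆ x, A⁻¹ * f x = ⨆ x, B⁻¹ * g x := by
    rw [← ENNReal.mul_iSup, ← ENNReal.mul_iSup, ENNReal.inv_mul_cancel hA₀ hf_sup,
      ENNReal.inv_mul_cancel hB₀ hg_sup]
  have h_min (x y : ℝ) : min (A⁻¹ * f x) (B⁻¹ * g y) ≤ c * h (a • x + b • y) :=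
    calc min (A⁻¹ * f x) (B⁻¹ * g y) ≤ (A⁻¹ * f x) ^ a * (B⁻¹ * g y) ^ b :=
          ennreal_min_le_rpow_mul_rpow ha.le hb.le hab _ _
      _ = c * (f x ^ a * g y ^ b) := scale_mean _ _
      _ ≤ c * h (a • x + b • y) := by gcongr; exact hfgh x y
  refine (ENNReal.mul_le_mul_iff_right hc₀ hc).1 ?_
  calc c * ((∫⁻ x, f x) ^ a * (∫⁻ x, g x) ^ b)
      = (∫⁻ x, A⁻¹ * f x) ^ a * (∫⁻ x, B⁻¹ * g x) ^ b := by
        rw [lintegral_const_mul _ hf, lintegral_const_mul _ hg, scale_mean]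
    _ ≤ ENNReal.ofReal a * (∫⁻ x, A⁻¹ * f x) + ENNReal.ofReal b * (∫⁻ x, B⁻¹ * g x) :=
        ennreal_rpow_mul_rpow_le_weighted_add ha hb hab _ _
    _ ≤ ∫⁻ x, c * h x :=
        weighted_lintegral_add_le_of_min_le (hf.const_mul _) (hg.const_mul _) (hh.const_mul _)
          ha hb h_sup h_min
    _ = c * ∫⁻ x, h x := lintegral_const_mul _ hh

theorem lintegral_rpow_eq_iSup_lintegral_min_rpow {α : Type*} [MeasurableSpace α] (μ : Measure α)
    {u : α → ℝ≥0∞} (hu : Measurable u) {p : ℝ} (hp : 0 < p) :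
    (∫⁻ x, u x ∂μ) ^ p = ⨆ N : ℕ, (∫⁻ x, min (u x) N ∂μ) ^ p := by
  have h_iSup (x : α) : u x = ⨆ N : ℕ, min (u x) N := by
    rw [← inf_iSup_eq, ENNReal.iSup_natCast, inf_top_eq]
  calc (∫⁻ x, u x ∂μ) ^ p = (⨆ N : ℕ, ∫⁻ x, min (u x) N ∂μ) ^ p := by
        rw [← lintegral_iSup (fun N ↦ hu.min measurable_const)
          (fun M N hMN x ↦ min_le_min_left _ (by exact_mod_cast hMN))]
        simp only [← h_iSup]
    _ = ⨆ N : ℕ, (∫⁻ x, min (u x) N ∂μ) ^ p := (ENNReal.orderIsoRpow p hp).map_iSup _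

theorem isPrekopaLeindler_volume_real : IsPrekopaLeindler (volume : Measure ℝ) := by
  intro a b ha hb hab f g h hf hg hh hfgh
  have iSup_min_ne_top (u : ℝ → ℝ≥0∞) (N : ℕ) : ⨆ x, min (u x) N ≠ ∞ :=
    ne_top_of_le_ne_top (ENNReal.natCast_ne_top N) (iSup_le fun _ ↦ min_le_right _ _)
  rw [lintegral_rpow_eq_iSup_lintegral_min_rpow volume hf ha,
    lintegral_rpow_eq_iSup_lintegral_min_rpow volume hg hb]
  simp only [ENNReal.iSup_mul, ENNReal.mul_iSup, iSup_le_iff]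
  intro N M
  refine lintegral_rpow_mul_lintegral_rpow_le_of_iSup_ne_top (hf.min measurable_const)
    (hg.min measurable_const) hh ha hb hab (iSup_min_ne_top f M) (iSup_min_ne_top g N)
    fun x y ↦ le_trans ?_ (hfgh x y)
  gcongr <;> exact min_le_left _ _

end Line

namespace IsPrekopaLeindler

variable {E F : Type*} [AddCommGroup E] [Module ℝ E] [MeasurableSpace E]
  [AddCommGroup F] [Module ℝ F] [MeasurableSpace F] {μ : Measure E} {ν : Measure F}

theorem dirac (x : E) : IsPrekopaLeindler (Measure.dirac x) := by
  intro a b _ _ hab f g h hf hg hh hfgh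
  simpa [lintegral_dirac' _ hf, lintegral_dirac' _ hg, lintegral_dirac' _ hh, Convex.combo_self hab]
    using hfgh x x

theorem map (hμ : IsPrekopaLeindler μ) {L : E →ₗ[ℝ] F} (hL : Measurable L) :
    IsPrekopaLeindler (μ.map L) := by
  intro a b ha hb hab f g h hf hg hh hfgh
  rw [lintegral_map hf hL, lintegral_map hg hL, lintegral_map hh hL]
  refine hμ ha hb hab (hf.comp hL) (hg.comp hL) (hh.comp hL) fun x y ↦ ?_
  simpa only [Function.comp_apply, map_add, map_smul] using hfgh (L x) (L y)

theorem smul (hμ : IsPrekopaLeindler μ) (c : ℝ≥0∞) : IsPrekopaLeindler (c • μ) := by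
  intro a b ha hb hab f g h hf hg hh hfgh
  simp only [lintegral_smul_measure, smul_eq_mul]
  calc (c * ∫⁻ x, f x ∂μ) ^ a * (c * ∫⁻ x, g x ∂μ) ^ b
      = c * ((∫⁻ x, f x ∂μ) ^ a * (∫⁻ x, g x ∂μ) ^ b) := by
        rw [ENNReal.mul_rpow_of_nonneg _ _ ha.le, ENNReal.mul_rpow_of_nonneg _ _ hb.le,
          mul_mul_mul_comm, ennreal_rpow_mul_rpow_self ha.le hb.le hab]
    _ ≤ c * ∫⁻ x, h x ∂μ := by gcongr; exact hμ ha hb hab hf hg hh hfgh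

theorem prod [SFinite ν] (hμ : IsPrekopaLeindler μ) (hν : IsPrekopaLeindler ν) :
    IsPrekopaLeindler (μ.prod ν) := by
  intro a b ha hb hab f g h hf hg hh hfgh
  rw [lintegral_prod _ hf.aemeasurable, lintegral_prod _ hg.aemeasurable,
    lintegral_prod _ hh.aemeasurable]
  exact hμ ha hb hab hf.lintegral_prod_right' hg.lintegral_prod_right' hh.lintegral_prod_right'
    fun x₁ x₂ ↦ hν ha hb hab (hf.comp measurable_prodMk_left) (hg.comp measurable_prodMk_left)
      (hh.comp measurable_prodMk_left) fun y₁ y₂ ↦ hfgh (x₁, y₁) (x₂, y₂)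

theorem restrict (hμ : IsPrekopaLeindler μ) {K : Set E} (hK : Convex ℝ K)
    (hKm : MeasurableSet K) : IsPrekopaLeindler (μ.restrict K) := by
  intro a b ha hb hab f g h hf hg hh hfgh
  simp only [← lintegral_indicator hKm]
  refine hμ ha hb hab (hf.indicator hKm) (hg.indicator hKm) (hh.indicator hKm) fun x y ↦ ?_
  by_cases hx : x ∈ K
  · by_cases hy : y ∈ K
    · simpa [hx, hy, hK hx hy ha.le hb.le hab] using hfgh x y
    · simp [hy, hb]
  · simp [hx, ha]

theorem integral_rpow_mul_integral_rpow_le (hμ : IsPrekopaLeindler μ) {a b : ℝ} (ha : 0 < a)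
    (hb : 0 < b) (hab : a + b = 1) {f g h : E → ℝ} (hfm : Measurable f) (hgm : Measurable g)
    (hhm : Measurable h) (hf : Integrable f μ) (hg : Integrable g μ) (hh : Integrable h μ)
    (hf₀ : 0 ≤ f) (hg₀ : 0 ≤ g) (hfgh : ∀ x y, f x ^ a * g y ^ b ≤ h (a • x + b • y)) :
    (∫ x, f x ∂μ) ^ a * (∫ x, g x ∂μ) ^ b ≤ ∫ x, h x ∂μ := by
  have ofReal_mean {u v : ℝ} (hu : 0 ≤ u) (hv : 0 ≤ v) :
      ENNReal.ofReal (u ^ a * v ^ b) = ENNReal.ofReal u ^ a * ENNReal.ofReal v ^ b := by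
    rw [ENNReal.ofReal_mul (by positivity), ENNReal.ofReal_rpow_of_nonneg hu ha.le,
      ENNReal.ofReal_rpow_of_nonneg hv hb.le]
  have hh₀ : 0 ≤ h := fun x ↦
    calc 0 ≤ f x ^ a * g x ^ b :=
          mul_nonneg (Real.rpow_nonneg (hf₀ x) _) (Real.rpow_nonneg (hg₀ x) _)
      _ ≤ h x := by simpa only [Convex.combo_self hab] using hfgh x x
  rw [← ENNReal.ofReal_le_ofReal_iff (integral_nonneg hh₀),
    ofReal_mean (integral_nonneg hf₀) (integral_nonneg hg₀),
    ofReal_integral_eq_lintegral_ofReal hf (.of_forall hf₀),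
    ofReal_integral_eq_lintegral_ofReal hg (.of_forall hg₀),
    ofReal_integral_eq_lintegral_ofReal hh (.of_forall hh₀)]
  refine hμ ha hb hab hfm.ennreal_ofReal hgm.ennreal_ofReal hhm.ennreal_ofReal fun x y ↦ ?_
  rw [← ofReal_mean (hf₀ x) (hg₀ y)]
  exact ENNReal.ofReal_le_ofReal (hfgh x y)

end IsPrekopaLeindler

theorem isPrekopaLeindler_volume_pi (n : ℕ) : IsPrekopaLeindler (volume : Measure (Fin n → ℝ)) := by
  induction n with
  | zero => rw [volume_pi, Measure.pi_of_empty]; exact .dirac _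
  | succ n ih =>
    let L := Fin.consEquivL ℝ fun _ : Fin (n + 1) ↦ ℝ
    let e := MeasurableEquiv.piFinSuccAbove (fun _ : Fin (n + 1) ↦ ℝ) 0
    have h_eq : ⇑L = e.symm := by
      ext p i
      refine Fin.cases ?_ (fun j ↦ ?_) i <;> simp [L, e, MeasurableEquiv.piFinSuccAbove]
    have hL : volume.map L = volume := by
      rw [h_eq]
      exact (volume_preserving_piFinSuccAbove (fun _ : Fin (n + 1) ↦ ℝ) 0).symm.map_eq
    rw [← hL]
    exact (isPrekopaLeindler_volume_real.prod ih).map (L := L.toLinearMap) L.continuous.measurable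

section FiniteDimensional

variable {E : Type*} [NormedAddCommGroup E] [NormedSpace ℝ E] [FiniteDimensional ℝ E]
  [MeasurableSpace E] [BorelSpace E] (μ : Measure E) [μ.IsAddHaarMeasure]

theorem isPrekopaLeindler_of_isAddHaarMeasure : IsPrekopaLeindler μ := by
  let L : (Fin (Module.finrank ℝ E) → ℝ) ≃L[ℝ] E := .ofFinrankEq (by simp)
  have hL : IsPrekopaLeindler (volume.map L) :=
    (isPrekopaLeindler_volume_pi _).map (L := L.toLinearMap) L.continuous.measurable
  rw [Measure.isAddLeftInvariant_eq_smul μ (volume.map L)]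
  exact hL.smul _

theorem isPrekopaLeindler_restrict_of_convex {K : Set E} (hK : Convex ℝ K) :
    IsPrekopaLeindler (μ.restrict K) := by
  rw [← Measure.restrict_congr_set (interior_ae_eq_of_null_frontier (hK.addHaar_frontier μ))]
  exact (isPrekopaLeindler_of_isAddHaarMeasure μ).restrict hK.interior measurableSet_interior

end FiniteDimensional

theorem convexOn_sq_norm_div {E : Type*} [NormedAddCommGroup E] [NormedSpace ℝ E] :
    ConvexOn ℝ {p : E × ℝ | 0 < p.2} fun p ↦ ‖p.1‖ ^ 2 / p.2 := by
  refine convexOn_iff_forall_pos.2 ⟨convex_halfSpace_gt (LinearMap.snd ℝ E ℝ).isLinear 0, ?_⟩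
  rintro ⟨x, s⟩ hs ⟨y, t⟩ ht a b ha hb -
  rw [mem_ofPred_eq] at hs ht
  have h_norm : ‖a • x + b • y‖ ≤ a * ‖x‖ + b * ‖y‖ := by
    simpa [norm_smul, abs_of_pos, ha, hb] using norm_add_le (a • x) (b • y)
  have h_sedrakyan : (a * ‖x‖ + b * ‖y‖) ^ 2 / (a * s + b * t)
      ≤ (a * ‖x‖) ^ 2 / (a * s) + (b * ‖y‖) ^ 2 / (b * t) := by
    simpa using Finset.univ.sq_sum_div_le_sum_sq_div ![a * ‖x‖, b * ‖y‖] (g := ![a * s, b * t])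
      (by simp [Fin.forall_fin_two, *])
  calc ‖a • x + b • y‖ ^ 2 / (a * s + b * t)
      ≤ (a * ‖x‖ + b * ‖y‖) ^ 2 / (a * s + b * t) := by gcongr
    _ ≤ (a * ‖x‖) ^ 2 / (a * s) + (b * ‖y‖) ^ 2 / (b * t) := h_sedrakyan
    _ = a * (‖x‖ ^ 2 / s) + b * (‖y‖ ^ 2 / t) := by field_simp

section GaussianIntegral

variable {E : Type*} [NormedAddCommGroup E] [MeasurableSpace E]

/-- The integral `F(s)` of the unnormalized centered Gaussian of variance `s` against `μ`; for a
body `K`, take `μ` to be Lebesgue measure restricted to `K`. -/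
noncomputable def gaussianIntegral (μ : Measure E) (s : ℝ) : ℝ :=
  ∫ x, Real.exp (-‖x‖ ^ 2 / (2 * s)) ∂μ

theorem gaussianIntegral_nonneg (μ : Measure E) (s : ℝ) : 0 ≤ gaussianIntegral μ s :=
  integral_nonneg fun _ ↦ (Real.exp_pos _).le

variable [OpensMeasurableSpace E] {μ : Measure E} [IsFiniteMeasure μ] {s t : ℝ}

theorem integrable_exp_neg_sq_norm_div (hs : 0 ≤ s) :
    Integrable (fun x : E ↦ Real.exp (-‖x‖ ^ 2 / (2 * s))) μ := by
  refine .of_bound (by fun_prop) 1 (.of_forall fun x ↦ ?_)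
  rw [Real.norm_eq_abs, Real.abs_exp, Real.exp_le_one_iff]
  exact div_nonpos_of_nonpos_of_nonneg (by simp) (by positivity)

theorem gaussianIntegral_le_exp_mul (hs : 0 < s) (hst : s ≤ t) {R : ℝ} (hR : ∀ᵐ x ∂μ, ‖x‖ ≤ R) :
    gaussianIntegral μ t ≤ Real.exp (R ^ 2 / 2 * (s⁻¹ - t⁻¹)) * gaussianIntegral μ s := by
  have ht : 0 < t := hs.trans_le hst
  have h_inv : 0 ≤ s⁻¹ - t⁻¹ := sub_nonneg.2 (inv_anti₀ hs hst)
  rw [gaussianIntegral, gaussianIntegral, ← integral_const_mul]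
  refine integral_mono_ae (integrable_exp_neg_sq_norm_div ht.le)
    ((integrable_exp_neg_sq_norm_div hs.le).const_mul _) ?_
  filter_upwards [hR] with x hx
  rw [← Real.exp_add, Real.exp_le_exp]
  calc -‖x‖ ^ 2 / (2 * t) = ‖x‖ ^ 2 / 2 * (s⁻¹ - t⁻¹) + -‖x‖ ^ 2 / (2 * s) := by
        field_simp
        ring
    _ ≤ R ^ 2 / 2 * (s⁻¹ - t⁻¹) + -‖x‖ ^ 2 / (2 * s) := by gcongr

variable [NormedSpace ℝ E]

theorem gaussianIntegral_rpow_mul_rpow_le (hμ : IsPrekopaLeindler μ) (hs : 0 < s) (ht : 0 < t)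
    {a b : ℝ} (ha : 0 < a) (hb : 0 < b) (hab : a + b = 1) :
    gaussianIntegral μ s ^ a * gaussianIntegral μ t ^ b ≤ gaussianIntegral μ (a * s + b * t) := by
  refine hμ.integral_rpow_mul_integral_rpow_le ha hb hab (by fun_prop) (by fun_prop) (by fun_prop)
    (integrable_exp_neg_sq_norm_div hs.le) (integrable_exp_neg_sq_norm_div ht.le)
    (integrable_exp_neg_sq_norm_div (by positivity)) (fun _ ↦ (Real.exp_pos _).le)
    (fun _ ↦ (Real.exp_pos _).le) fun x y ↦ ?_
  have h_convex : ‖a • x + b • y‖ ^ 2 / (a * s + b * t) ≤ a * (‖x‖ ^ 2 / s) + b * (‖y‖ ^ 2 / t) :=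
    convexOn_sq_norm_div.2 (x := (x, s)) hs (y := (y, t)) ht ha.le hb.le hab
  rw [← Real.exp_mul, ← Real.exp_mul, ← Real.exp_add, Real.exp_le_exp]
  calc -‖x‖ ^ 2 / (2 * s) * a + -‖y‖ ^ 2 / (2 * t) * b
      = -(a * (‖x‖ ^ 2 / s) + b * (‖y‖ ^ 2 / t)) / 2 := by field_simp; ring
    _ ≤ -(‖a • x + b • y‖ ^ 2 / (a * s + b * t)) / 2 := by gcongr
    _ = -‖a • x + b • y‖ ^ 2 / (2 * (a * s + b * t)) := by
        rw [← neg_div, div_div, mul_comm 2]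

theorem gaussianIntegral_mul_le_sq_midpoint (hμ : IsPrekopaLeindler μ) (hs : 0 < s) (ht : 0 < t) :
    gaussianIntegral μ s * gaussianIntegral μ t ≤ gaussianIntegral μ ((s + t) / 2) ^ 2 := by
  have h_sqrt := gaussianIntegral_rpow_mul_rpow_le hμ hs ht one_half_pos one_half_pos
    (add_halves 1)
  rw [← Real.sqrt_eq_rpow, ← Real.sqrt_eq_rpow, ← Real.sqrt_mul (gaussianIntegral_nonneg μ s),
    ← mul_add, one_div_mul_eq_div] at h_sqrt
  exact (Real.sqrt_le_left (gaussianIntegral_nonneg μ _)).1 h_sqrt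

end GaussianIntegral

theorem variance_bound_accelerated_cooling_general {E : Type*} [NormedAddCommGroup E]
    [NormedSpace ℝ E] [FiniteDimensional ℝ E] [MeasurableSpace E] [BorelSpace E] (μ : Measure E)
    [μ.IsAddHaarMeasure] {K : Set E} (hK : Convex ℝ K) {R : ℝ} (hKR : K ⊆ Metric.closedBall 0 R)
    {s α : ℝ} (hs : 0 < s) (hα : |α| < 1) :
    gaussianIntegral (μ.restrict K) (s / (1 + α)) * gaussianIntegral (μ.restrict K) (s / (1 - α)) ≤
      Real.exp (α ^ 2 * R ^ 2 / s) * gaussianIntegral (μ.restrict K) s ^ 2 := by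
  obtain ⟨hα_left, hα_right⟩ := abs_lt.1 hα
  have h_add : 0 < 1 + α := by linarith
  have h_sub : 0 < 1 - α := by linarith
  have h_sq : 0 < 1 - α ^ 2 := sub_pos.2 ((sq_lt_one_iff_abs_lt_one α).2 hα)
  have : IsFiniteMeasure (μ.restrict K) :=
    isFiniteMeasure_restrict.2 (Metric.isBounded_closedBall.subset hKR).measure_lt_top.ne
  have h_norm : ∀ᵐ x ∂μ.restrict K, ‖x‖ ≤ R := by
    filter_upwards [ae_mono (Measure.restrict_mono_set μ hKR)
      (ae_restrict_mem Metric.isClosed_closedBall.measurableSet)] with x hx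
    exact mem_closedBall_zero_iff.1 hx
  have h_mid : (s / (1 + α) + s / (1 - α)) / 2 = s / (1 - α ^ 2) := by
    rw [show 1 - α ^ 2 = (1 + α) * (1 - α) by ring]
    field_simp
    ring
  calc _ ≤ gaussianIntegral (μ.restrict K) (s / (1 - α ^ 2)) ^ 2 :=
        h_mid ▸ gaussianIntegral_mul_le_sq_midpoint (isPrekopaLeindler_restrict_of_convex μ hK)
          (div_pos hs h_add) (div_pos hs h_sub)
    _ ≤ (Real.exp (R ^ 2 / 2 * (s⁻¹ - (s / (1 - α ^ 2))⁻¹))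
          * gaussianIntegral (μ.restrict K) s) ^ 2 := by
        gcongr
        · exact gaussianIntegral_nonneg _ _
        · exact gaussianIntegral_le_exp_mul hs
            (le_div_self hs.le h_sq (sub_le_self 1 (sq_nonneg α))) h_norm
    _ = Real.exp (α ^ 2 * R ^ 2 / s) * gaussianIntegral (μ.restrict K) s ^ 2 := by
        rw [mul_pow, ← Real.exp_nat_mul]
        congr 2
        field_simp
        ring

/-- Variance bound for the ratio estimator (accelerated cooling):
for a convex body `K ⊆ C√n·B_n`, with `F(s) = ∫_K exp(-‖x‖²/(2s)) dx`,
and `0 < α ≤ 1/2`, one has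
`F(σ²/(1+α)) · F(σ²/(1-α)) ≤ exp(2C²α²n/σ²) · F(σ²)²`. -/
theorem variance_bound_accelerated_cooling
    (n : ℕ) (hn : 1 ≤ n) (C : ℝ) (hC : 0 < C)
    (K : Set (EuclideanSpace ℝ (Fin n)))
    (hKconv : Convex ℝ K) (hKcomp : IsCompact K) (hKint : (interior K).Nonempty)
    (hKsub : K ⊆ Metric.closedBall 0 (C * Real.sqrt n))
    (σ α : ℝ) (hσ : 0 < σ) (hα0 : 0 < α) (hα : α ≤ 1 / 2) :
    (∫ x in K, Real.exp (-‖x‖ ^ 2 / (2 * (σ ^ 2 / (1 + α))))) *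
      (∫ x in K, Real.exp (-‖x‖ ^ 2 / (2 * (σ ^ 2 / (1 - α))))) ≤
    Real.exp (2 * C ^ 2 * α ^ 2 * n / σ ^ 2) *
      (∫ x in K, Real.exp (-‖x‖ ^ 2 / (2 * σ ^ 2))) ^ 2 := by
  have h_exponent : α ^ 2 * (C * √n) ^ 2 / σ ^ 2 ≤ 2 * C ^ 2 * α ^ 2 * n / σ ^ 2 := by
    rw [mul_pow, Real.sq_sqrt n.cast_nonneg]
    gcongr ?_ / _
    nlinarith [show 0 ≤ C ^ 2 * α ^ 2 * n by positivity]
  exact (variance_bound_accelerated_cooling_general volume hKconv hKsub (sq_pos_of_pos hσ)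
    (abs_lt.2 ⟨by linarith, by linarith⟩)).trans
      (mul_le_mul_of_nonneg_right (Real.exp_le_exp.2 h_exponent) (sq_nonneg _))
end

section
/- Let n ≥ 1, σ > 0 with σ² ≤ 64n, and δ ≤ σ/(8√n). Let u, x ∈ ℝⁿ with ‖u‖ ≤ 4σ√n and ‖x − u‖ ≤ δ. Then exp(−(‖x‖² − ‖u‖²)/(2σ²)) ≥ 1/e. In particular, for f(x) = exp(−‖x‖²/(2σ²)), the Metropolis acceptance probability min{1, f(x)/f(u)} is at least 1/e. -/
open MeasureTheory

/-!
A step of length at most `δ` from a point of norm at most `R` raises the squared norm by at most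
`2Rδ + δ²`, and a Gaussian of variance `σ²` loses a factor `e` only once the squared norm has risen
by `2σ²`. With `R = 4σ√n` and `δ = σ/(8√n)` the dimension cancels in the cross term:
`2Rδ = σ²`, while `δ² ≤ σ²/64`.
-/

theorem norm_sq_sub_norm_sq_le {E : Type*} [SeminormedAddGroup E] {u x : E} {R δ : ℝ}
    (hu : ‖u‖ ≤ R) (hxu : ‖x - u‖ ≤ δ) : ‖x‖ ^ 2 - ‖u‖ ^ 2 ≤ 2 * R * δ + δ ^ 2 := by
  have hδ : 0 ≤ δ := (norm_nonneg _).trans hxu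
  have hx : ‖x‖ ≤ ‖u‖ + δ := (norm_le_norm_add_norm_sub' x u).trans (by gcongr)
  calc ‖x‖ ^ 2 - ‖u‖ ^ 2 ≤ (‖u‖ + δ) ^ 2 - ‖u‖ ^ 2 := by gcongr
    _ = 2 * ‖u‖ * δ + δ ^ 2 := by ring
    _ ≤ 2 * R * δ + δ ^ 2 := by gcongr

theorem one_div_exp_one_le_exp_neg_div {a c : ℝ} (hc : 0 < c) (hac : a ≤ c) :
    1 / Real.exp 1 ≤ Real.exp (-a / c) := by
  rw [one_div, ← Real.exp_neg, Real.exp_le_exp, neg_div, neg_le_neg_iff]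
  exact (div_le_one hc).mpr hac

theorem exp_neg_div_div_exp_neg_div (a b c : ℝ) :
    Real.exp (-a / c) / Real.exp (-b / c) = Real.exp (-(a - b) / c) := by
  rw [← Real.exp_sub, ← sub_div, neg_sub_neg, neg_sub]

theorem two_mul_radius_mul_step_add_step_sq_le (σ : ℝ) {r : ℝ} (hr : 1 ≤ 8 * r) :
    2 * (4 * σ * r) * (σ / (8 * r)) + (σ / (8 * r)) ^ 2 ≤ 2 * σ ^ 2 := by
  have hr₀ : r ≠ 0 := by rintro rfl; norm_num at hr
  have hcross : 2 * (4 * σ * r) * (σ / (8 * r)) = σ ^ 2 := by field_simp; ring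
  have hstep : (σ / (8 * r)) ^ 2 ≤ σ ^ 2 := by
    rw [div_pow]
    exact div_le_self (sq_nonneg σ) (one_le_pow₀ hr)
  linarith

theorem metropolis_acceptance_bound_general {E : Type*} [SeminormedAddGroup E] {σ R δ : ℝ}
    (hσ : σ ≠ 0) (hRδ : 2 * R * δ + δ ^ 2 ≤ 2 * σ ^ 2) {u x : E}
    (hu : ‖u‖ ≤ R) (hxu : ‖x - u‖ ≤ δ) :
    1 / Real.exp 1 ≤ Real.exp (-(‖x‖ ^ 2 - ‖u‖ ^ 2) / (2 * σ ^ 2)) ∧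
    1 / Real.exp 1 ≤
      min 1 (Real.exp (-‖x‖ ^ 2 / (2 * σ ^ 2)) / Real.exp (-‖u‖ ^ 2 / (2 * σ ^ 2))) := by
  have hratio : 1 / Real.exp 1 ≤ Real.exp (-(‖x‖ ^ 2 - ‖u‖ ^ 2) / (2 * σ ^ 2)) :=
    one_div_exp_one_le_exp_neg_div (by positivity) ((norm_sq_sub_norm_sq_le hu hxu).trans hRδ)
  have hone : 1 / Real.exp 1 ≤ 1 :=
    div_le_one_of_le₀ (Real.one_le_exp zero_le_one) (Real.exp_pos 1).le
  rw [exp_neg_div_div_exp_neg_div]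
  exact ⟨hratio, le_min hone hratio⟩

/-- Metropolis acceptance probability bound for the ball walk with step size
`δ ≤ σ/(8√n)` on the Gaussian of variance `σ² ≤ 64n` restricted to `4σ√n·B_n`:
if `‖u‖ ≤ 4σ√n` and `‖x - u‖ ≤ δ`, then `exp(-(‖x‖²-‖u‖²)/(2σ²)) ≥ 1/e`, and in
particular `min{1, f(x)/f(u)} ≥ 1/e` for `f(x) = exp(-‖x‖²/(2σ²))`. -/
theorem metropolis_acceptance_bound
    (n : ℕ) (hn : 1 ≤ n) (σ δ : ℝ) (hσ : 0 < σ) (hσ2 : σ ^ 2 ≤ 64 * n)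
    (hδ : δ ≤ σ / (8 * Real.sqrt n))
    (u x : EuclideanSpace ℝ (Fin n))
    (hu : ‖u‖ ≤ 4 * σ * Real.sqrt n) (hxu : ‖x - u‖ ≤ δ) :
    1 / Real.exp 1 ≤ Real.exp (-(‖x‖ ^ 2 - ‖u‖ ^ 2) / (2 * σ ^ 2)) ∧
    1 / Real.exp 1 ≤
      min 1 (Real.exp (-‖x‖ ^ 2 / (2 * σ ^ 2)) / Real.exp (-‖u‖ ^ 2 / (2 * σ ^ 2))) := by
  have hn₁ : 1 ≤ √(n : ℝ) := Real.one_le_sqrt.mpr (mod_cast hn)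
  exact metropolis_acceptance_bound_general hσ.ne'
    (two_mul_radius_mul_step_add_step_sq_le σ (by linarith)) hu (hxu.trans hδ)
end

section
/- Let n ≥ 1 and let K ⊆ ℝⁿ be a convex body with 0 ∈ K. Let σ_i > 0, let σ_{i+1}² = σ_i²·(1 + 1/n), and let f_i(x) = exp(−‖x‖²/(2σ_i²)), f_{i+1}(x) = exp(−‖x‖²/(2σ_{i+1}²)). Let Q_i and Q_{i+1} be the probability measures on K with densities proportional to f_i and f_{i+1} respectively. Then for every measurable S ⊆ K, Q_i(S) ≤ √e · Q_{i+1}(S); i.e., the warmness M(Q_i, Q_{i+1}) = sup_{S ⊆ K} Q_i(S)/Q_{i+1}(S) is at most √e. -/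
open MeasureTheory

/-!
Let `f` be a radially nonincreasing weight and `c ≥ 1`. Replacing `f` by `x ↦ f (c⁻¹ • x)` can only
increase the mass of `S`, while in dimension `d` it multiplies the mass of a set `K` star-shaped
about the origin by at most `c ^ d`: a change of variables turns `K` into `c⁻¹ • K ⊆ K`. So the
relative mass of `S` in `K` drops by a factor of at most `c ^ d`. For Gaussian weights, multiplying
the variance by `1 + 1 / d` is the stretch with `c = √(1 + 1 / d)`, and
`c ^ d = (1 + 1 / d) ^ (d / 2) ≤ √e`.
-/

open Module Real
open scoped Pointwise

/-- The paper's `Q(S)`: the probability of `S` under the distribution on `K` whose density with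
respect to `μ` is proportional to `f`. It is a quotient of Bochner integrals, hence meaningful when
`f` is integrable on `K` with nonzero integral and `S ⊆ K`. -/
noncomputable def massFraction {α : Type*} [MeasurableSpace α] (μ : Measure α) (f : α → ℝ)
    (K S : Set α) : ℝ :=
  (∫ x in S, f x ∂μ) / ∫ x in K, f x ∂μ

/-- The unnormalized centered Gaussian density; for Euclidean `E` its variance in each direction
is `v`, the paper's `σ ^ 2`, so that cooling schedules act on the parameter by multiplication. -/
noncomputable def gaussianWeight {E : Type*} [Norm E] (v : ℝ) (x : E) : ℝ :=
  exp (-‖x‖ ^ 2 / (2 * v))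

theorem massFraction_le_mul_massFraction {α : Type*} [MeasurableSpace α] {μ : Measure α}
    {f g : α → ℝ} {K S : Set α} {C : ℝ} (hSK : S ⊆ K) (hfK : IntegrableOn f K μ)
    (hgK : IntegrableOn g K μ) (hf_pos : 0 < ∫ x in K, f x ∂μ) (hg : 0 ≤ g) (hfg : f ≤ g)
    (hC : ∫ x in K, g x ∂μ ≤ C * ∫ x in K, f x ∂μ) :
    massFraction μ f K S ≤ C * massFraction μ g K S := by
  have hg_pos : 0 < ∫ x in K, g x ∂μ := hf_pos.trans_le (setIntegral_mono hfK hgK hfg)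
  have hS_le : ∫ x in S, f x ∂μ ≤ ∫ x in S, g x ∂μ :=
    setIntegral_mono (hfK.mono_set hSK) (hgK.mono_set hSK) hfg
  have hS_nonneg : 0 ≤ ∫ x in S, g x ∂μ := integral_nonneg hg
  rw [massFraction, massFraction, ← mul_div_assoc, div_le_div_iff₀ hf_pos hg_pos]
  calc (∫ x in S, f x ∂μ) * ∫ x in K, g x ∂μ
      ≤ (∫ x in S, g x ∂μ) * (C * ∫ x in K, f x ∂μ) := by gcongr
    _ = C * (∫ x in S, g x ∂μ) * ∫ x in K, f x ∂μ := by ring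

theorem massFraction_nonneg {α : Type*} [MeasurableSpace α] {μ : Measure α} {f : α → ℝ}
    (hf : 0 ≤ f) (K S : Set α) : 0 ≤ massFraction μ f K S :=
  div_nonneg (integral_nonneg hf) (integral_nonneg hf)

theorem inv_smul_subset_of_starConvex {E : Type*} [AddCommGroup E] [Module ℝ E] {K : Set E}
    (hK : StarConvex ℝ 0 K) {c : ℝ} (hc : 1 ≤ c) : c⁻¹ • K ⊆ K :=
  Set.smul_set_subset_iff.2 fun _ hx =>
    hK.smul_mem hx (inv_nonneg.2 (zero_le_one.trans hc)) (inv_le_one_of_one_le₀ hc)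

section Rescaling

variable {E : Type*} [NormedAddCommGroup E] [NormedSpace ℝ E] [FiniteDimensional ℝ E]
  [MeasurableSpace E] [BorelSpace E] {μ : Measure E} [μ.IsAddHaarMeasure]

theorem integrableOn_comp_smul_iff {F : Type*} [NormedAddCommGroup F] {f : E → F} {s : Set E}
    {c : ℝ} (hc : c ≠ 0) :
    IntegrableOn (fun x => f (c • x)) s μ ↔ IntegrableOn f (c • s) μ := by
  have hpre : (c • ·) ⁻¹' (c • s) = s := Set.preimage_image_eq s (smul_right_injective E hc)
  have hscale : ENNReal.ofReal |(c ^ finrank ℝ E)⁻¹| ≠ 0 :=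
    (ENNReal.ofReal_pos.2 (by positivity)).ne'
  calc IntegrableOn (fun x => f (c • x)) s μ
      ↔ IntegrableOn f (c • s) (μ.map (c • ·)) := by
        rw [(measurableEmbedding_const_smul₀ hc).integrableOn_map_iff, hpre,
          Function.comp_def]
    _ ↔ IntegrableOn f (c • s) μ := by
        rw [Measure.map_addHaar_smul μ hc, IntegrableOn, Measure.restrict_smul,
          integrable_smul_measure hscale ENNReal.ofReal_ne_top, IntegrableOn]

theorem setIntegral_comp_inv_smul_le {K : Set E} (hK : StarConvex ℝ 0 K) {f : E → ℝ} (hf : 0 ≤ f)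
    (hfK : IntegrableOn f K μ) {c : ℝ} (hc : 1 ≤ c) :
    ∫ x in K, f (c⁻¹ • x) ∂μ ≤ c ^ finrank ℝ E * ∫ x in K, f x ∂μ := by
  have hc_pos : 0 < c := one_pos.trans_le hc
  calc ∫ x in K, f (c⁻¹ • x) ∂μ = c ^ finrank ℝ E * ∫ x in c⁻¹ • K, f x ∂μ := by
        rw [Measure.setIntegral_comp_smul_of_pos μ f K (inv_pos.2 hc_pos), smul_eq_mul, inv_pow,
          inv_inv]
    _ ≤ c ^ finrank ℝ E * ∫ x in K, f x ∂μ := by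
        gcongr
        · exact .of_forall hf
        · exact inv_smul_subset_of_starConvex hK hc

theorem massFraction_le_pow_mul_massFraction_comp_inv_smul {K S : Set E} (hK : StarConvex ℝ 0 K)
    (hSK : S ⊆ K) {f : E → ℝ} (hf : 0 ≤ f) (hfK : IntegrableOn f K μ)
    (hf_pos : 0 < ∫ x in K, f x ∂μ) {c : ℝ} (hc : 1 ≤ c) (hfc : ∀ x, f x ≤ f (c⁻¹ • x)) :
    massFraction μ f K S ≤ c ^ finrank ℝ E * massFraction μ (fun x => f (c⁻¹ • x)) K S := by
  have hc_ne : c⁻¹ ≠ 0 := inv_ne_zero (one_pos.trans_le hc).ne'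
  have hstretch : IntegrableOn (fun x => f (c⁻¹ • x)) K μ :=
    (integrableOn_comp_smul_iff hc_ne).2 (hfK.mono_set (inv_smul_subset_of_starConvex hK hc))
  exact massFraction_le_mul_massFraction hSK hfK hstretch hf_pos (fun x => hf (c⁻¹ • x)) hfc
    (setIntegral_comp_inv_smul_le hK hf hfK hc)

end Rescaling

section Gaussian

theorem gaussianWeight_nonneg {E : Type*} [Norm E] (v : ℝ) : 0 ≤ gaussianWeight (E := E) v :=
  fun _ => (exp_pos _).le

variable {E : Type*} [NormedAddCommGroup E]

theorem gaussianWeight_le_of_norm_le {v : ℝ} (hv : 0 ≤ v) {x y : E} (hxy : ‖x‖ ≤ ‖y‖) :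
    gaussianWeight v y ≤ gaussianWeight v x := by
  unfold gaussianWeight
  gcongr

variable [NormedSpace ℝ E]

theorem gaussianWeight_inv_smul (v c : ℝ) (x : E) :
    gaussianWeight v (c⁻¹ • x) = gaussianWeight (v * c ^ 2) x := by
  simp only [gaussianWeight, norm_smul, norm_inv, norm_eq_abs, mul_pow, inv_pow, sq_abs]
  ring_nf

variable [FiniteDimensional ℝ E] [MeasurableSpace E] [BorelSpace E] {μ : Measure E}
  [μ.IsAddHaarMeasure]

theorem integrable_gaussianWeight {v : ℝ} (hv : 0 < v) : Integrable (gaussianWeight v) μ := by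
  rcases subsingleton_or_nontrivial E with _ | _
  · exact .of_finite
  have hradial : IntegrableOn (fun r : ℝ => r ^ (finrank ℝ E - 1) * exp (-(2 * v)⁻¹ * r ^ 2))
      (Set.Ioi 0) := by
    have h := integrableOn_rpow_mul_exp_neg_mul_sq (b := (2 * v)⁻¹) (by positivity)
      (s := (finrank ℝ E - 1 : ℕ)) (neg_one_lt_zero.trans_le (Nat.cast_nonneg _))
    simpa only [rpow_natCast] using h
  convert (integrable_fun_norm_addHaar μ).2 hradial using 2 with x
  rw [gaussianWeight, neg_div, div_eq_inv_mul, neg_mul]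

theorem setIntegral_gaussianWeight_pos {v : ℝ} (hv : 0 < v) {K : Set E} (hK : μ K ≠ 0) :
    0 < ∫ x in K, gaussianWeight v x ∂μ := by
  have : NeZero (μ.restrict K) := ⟨by rwa [Ne, Measure.restrict_eq_zero]⟩
  exact integral_exp_pos (integrable_gaussianWeight hv).integrableOn

theorem massFraction_gaussianWeight_le {K S : Set E} (hK : StarConvex ℝ 0 K) (hμK : μ K ≠ 0)
    (hSK : S ⊆ K) {v r : ℝ} (hv : 0 < v) (hr : 1 ≤ r) :
    massFraction μ (gaussianWeight v) K S ≤
      √r ^ finrank ℝ E * massFraction μ (gaussianWeight (v * r)) K S := by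
  have hc : 1 ≤ √r := one_le_sqrt.2 hr
  have hshrink (x : E) : ‖(√r)⁻¹ • x‖ ≤ ‖x‖ := by
    rw [norm_smul, norm_of_nonneg (by positivity)]
    exact mul_le_of_le_one_left (norm_nonneg x) (inv_le_one_of_one_le₀ hc)
  simpa only [gaussianWeight_inv_smul, sq_sqrt (zero_le_one.trans hr)] using
    massFraction_le_pow_mul_massFraction_comp_inv_smul hK hSK (gaussianWeight_nonneg v)
      (integrable_gaussianWeight hv).integrableOn (setIntegral_gaussianWeight_pos hv hμK) hc
      fun x => gaussianWeight_le_of_norm_le hv.le (hshrink x)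

end Gaussian

theorem sqrt_one_add_pow_le_sqrt_exp (t : ℝ) (d : ℕ) : √(1 + t) ^ d ≤ √(exp (d * t)) := by
  calc √(1 + t) ^ d ≤ √(exp t) ^ d := by
        gcongr
        rw [add_comm]
        exact add_one_le_exp t
    _ = √(exp (d * t)) := by
        rw [← exp_half, ← exp_half, ← exp_nat_mul, mul_div_assoc]

theorem warm_start_fixed_rate_general {E : Type*} [NormedAddCommGroup E] [NormedSpace ℝ E]
    [FiniteDimensional ℝ E] [Nontrivial E] [MeasurableSpace E] [BorelSpace E] {μ : Measure E}
    [μ.IsAddHaarMeasure] {K S : Set E} (hK : StarConvex ℝ 0 K) (hμK : μ K ≠ 0) (hSK : S ⊆ K)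
    {v : ℝ} (hv : 0 < v) :
    massFraction μ (gaussianWeight v) K S ≤
      √(exp 1) * massFraction μ (gaussianWeight (v * (1 + 1 / finrank ℝ E))) K S := by
  have hd : (finrank ℝ E : ℝ) ≠ 0 := Nat.cast_ne_zero.2 finrank_pos.ne'
  have hfactor : √(1 + 1 / finrank ℝ E : ℝ) ^ finrank ℝ E ≤ √(exp 1) := by
    simpa only [mul_one_div_cancel hd] using
      sqrt_one_add_pow_le_sqrt_exp (1 / finrank ℝ E) (finrank ℝ E)
  calc massFraction μ (gaussianWeight v) K S
      ≤ √(1 + 1 / finrank ℝ E : ℝ) ^ finrank ℝ E *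
          massFraction μ (gaussianWeight (v * (1 + 1 / finrank ℝ E))) K S :=
        massFraction_gaussianWeight_le hK hμK hSK hv (le_add_of_nonneg_right (by positivity))
    _ ≤ √(exp 1) * massFraction μ (gaussianWeight (v * (1 + 1 / finrank ℝ E))) K S :=
        mul_le_mul_of_nonneg_right hfactor (massFraction_nonneg (gaussianWeight_nonneg _) K S)

/-- Warm start at the fixed cooling rate: for a convex body `K ∋ 0` and
`σ_{i+1}² = σ_i²(1 + 1/n)`, the distributions `Q_i, Q_{i+1}` on `K` with
densities proportional to `exp(-‖x‖²/(2σ_i²))`, `exp(-‖x‖²/(2σ_{i+1}²))`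
satisfy `Q_i(S) ≤ √e · Q_{i+1}(S)` for every measurable `S ⊆ K`. -/
theorem warm_start_fixed_rate
    (n : ℕ) (hn : 1 ≤ n)
    (K : Set (EuclideanSpace ℝ (Fin n)))
    (hKconv : Convex ℝ K) (hKcomp : IsCompact K) (hKint : (interior K).Nonempty)
    (h0K : (0 : EuclideanSpace ℝ (Fin n)) ∈ K)
    (σ : ℝ) (hσ : 0 < σ)
    (S : Set (EuclideanSpace ℝ (Fin n))) (hS : MeasurableSet S) (hSK : S ⊆ K) :
    (∫ x in S, Real.exp (-‖x‖ ^ 2 / (2 * σ ^ 2))) /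
      (∫ x in K, Real.exp (-‖x‖ ^ 2 / (2 * σ ^ 2))) ≤
    Real.sqrt (Real.exp 1) *
      ((∫ x in S, Real.exp (-‖x‖ ^ 2 / (2 * (σ ^ 2 * (1 + 1 / n))))) /
        (∫ x in K, Real.exp (-‖x‖ ^ 2 / (2 * (σ ^ 2 * (1 + 1 / n)))))) := by
  have : Nontrivial (EuclideanSpace ℝ (Fin n)) :=
    nontrivial_of_finrank_pos (R := ℝ) (by rwa [finrank_euclideanSpace_fin])
  simpa only [massFraction, gaussianWeight, finrank_euclideanSpace_fin] using
    warm_start_fixed_rate_general (hKconv.starConvex h0K)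
      (Measure.measure_pos_of_nonempty_interior volume hKint).ne' hSK (pow_pos hσ 2)
end

section
/- Let n ≥ 2, σ > 0, set s = min{σ, 1}. Then for every t ∈ [0,1], ∫₀^{t·s} x^{n−1} e^{−x²/(2σ²)} dx ≤ t · ∫₀^{s} x^{n−1} e^{−x²/(2σ²)} dx. -/
open MeasureTheory intervalIntegral

/-!
The logarithmic derivative of the density `x ^ n * exp (-x ^ 2 / (2 * σ ^ 2))` is
`n / x - x / σ ^ 2`, so the density increases up to its mode `√n * σ` and its primitive is convex
on `[0, √n * σ]`. A convex function `F` with `F 0 = 0` satisfies `F (t * s) ≤ t * F s` for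
`t ∈ [0, 1]`. When the exponent is at least `1`, the interval `[0, min σ 1]` lies to the left of
the mode.
-/

open Set

theorem convexOn_integral_of_monotoneOn {f : ℝ → ℝ} {D : Set ℝ} {a : ℝ} (hD : Convex ℝ D)
    (ha : a ∈ D) (hf : MonotoneOn f D) : ConvexOn ℝ D fun u => ∫ x in a..u, f x := by
  have hint {u v : ℝ} (hu : u ∈ D) (hv : v ∈ D) : IntervalIntegrable f volume u v :=
    (hf.mono (hD.ordConnected.uIcc_subset hu hv)).intervalIntegrable
  refine convexOn_of_slope_mono_adjacent hD fun {u v w} hu hw huv hvw => ?_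
  have hv : v ∈ D := hD.ordConnected.out hu hw ⟨huv.le, hvw.le⟩
  rw [integral_interval_sub_left (hint ha hv) (hint ha hu),
    integral_interval_sub_left (hint ha hw) (hint ha hv)]
  have hleft : ∫ x in u..v, f x ≤ f v * (v - u) := by
    have hle := integral_mono_on huv.le (hint hu hv) (intervalIntegrable_const (c := f v))
      fun x hx => hf (hD.ordConnected.out hu hv hx) hv hx.2
    rwa [intervalIntegral.integral_const, smul_eq_mul, mul_comm] at hle
  have hright : f v * (w - v) ≤ ∫ x in v..w, f x := by
    have hle := integral_mono_on hvw.le (intervalIntegrable_const (c := f v)) (hint hv hw)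
      fun x hx => hf hv (hD.ordConnected.out hv hw hx) hx.1
    rwa [intervalIntegral.integral_const, smul_eq_mul, mul_comm] at hle
  calc (∫ x in u..v, f x) / (v - u) ≤ f v := (div_le_iff₀ (sub_pos.2 huv)).2 hleft
    _ ≤ (∫ x in v..w, f x) / (w - v) := (le_div_iff₀ (sub_pos.2 hvw)).2 hright

theorem hasDerivAt_pow_mul_exp_neg_sq_div (n : ℕ) (σ : ℝ) {x : ℝ} (hx : x ≠ 0) :
    HasDerivAt (fun y : ℝ => y ^ n * Real.exp (-y ^ 2 / (2 * σ ^ 2)))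
      (x ^ n * Real.exp (-x ^ 2 / (2 * σ ^ 2)) * (n / x - x / σ ^ 2)) x := by
  have hexp := ((hasDerivAt_pow 2 x).fun_neg.div_const (2 * σ ^ 2)).exp
  have hpow : (n : ℝ) * x ^ (n - 1) = x ^ n * (n / x) := by
    rcases n with _ | k
    · simp
    · rw [Nat.add_sub_cancel, pow_succ]
      field_simp
  refine ((hasDerivAt_pow n x).mul hexp).congr_deriv ?_
  rw [hpow]
  ring

theorem monotoneOn_pow_mul_exp_neg_sq_div (n : ℕ) {σ : ℝ} (hσ : 0 < σ) :
    MonotoneOn (fun x : ℝ => x ^ n * Real.exp (-x ^ 2 / (2 * σ ^ 2))) (Icc 0 (√n * σ)) := by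
  refine monotoneOn_of_hasDerivWithinAt_nonneg (convex_Icc _ _) (by fun_prop)
    (f' := fun x => x ^ n * Real.exp (-x ^ 2 / (2 * σ ^ 2)) * (n / x - x / σ ^ 2))
    (fun x hx => ?_) fun x hx => ?_
  all_goals obtain ⟨hx₀, hxσ⟩ : 0 < x ∧ x < √n * σ := by rwa [interior_Icc] at hx
  · exact (hasDerivAt_pow_mul_exp_neg_sq_div n σ hx₀.ne').hasDerivWithinAt
  · have hsq : x * x ≤ n * σ ^ 2 := by
      calc x * x ≤ (√n * σ) * (√n * σ) := by gcongr
        _ = n * σ ^ 2 := by rw [mul_mul_mul_comm, Real.mul_self_sqrt n.cast_nonneg, sq]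
    have hlog : x / σ ^ 2 ≤ n / x := (div_le_div_iff₀ (by positivity) hx₀).2 hsq
    exact mul_nonneg (by positivity) (sub_nonneg.2 hlog)

theorem convexOn_integral_pow_mul_exp_neg_sq_div (n : ℕ) {σ : ℝ} (hσ : 0 < σ) :
    ConvexOn ℝ (Icc 0 (√n * σ))
      fun u => ∫ x in (0 : ℝ)..u, x ^ n * Real.exp (-x ^ 2 / (2 * σ ^ 2)) :=
  convexOn_integral_of_monotoneOn (convex_Icc _ _) (left_mem_Icc.2 (by positivity))
    (monotoneOn_pow_mul_exp_neg_sq_div n hσ)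

theorem gaussian_radial_convexity_general (n : ℕ) {σ s t : ℝ} (hσ : 0 < σ) (hs₀ : 0 ≤ s)
    (hs : s ≤ √n * σ) (ht₀ : 0 ≤ t) (ht₁ : t ≤ 1) :
    ∫ x in (0 : ℝ)..(t * s), x ^ n * Real.exp (-x ^ 2 / (2 * σ ^ 2)) ≤
      t * ∫ x in (0 : ℝ)..s, x ^ n * Real.exp (-x ^ 2 / (2 * σ ^ 2)) := by
  have hconv := convexOn_integral_pow_mul_exp_neg_sq_div n hσ
  simpa using hconv.2 ⟨hs₀, hs⟩ (left_mem_Icc.2 (hs₀.trans hs)) ht₀ (sub_nonneg.2 ht₁)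
    (add_sub_cancel t 1)

/-- One-dimensional key inequality for `min{σ,1}`-roundedness of the restricted
Gaussian: with `s = min{σ,1}`, for every `t ∈ [0,1]`,
`∫₀^{ts} x^{n-1} e^{-x²/(2σ²)} dx ≤ t · ∫₀^{s} x^{n-1} e^{-x²/(2σ²)} dx`. -/
theorem gaussian_radial_convexity
    (n : ℕ) (hn : 2 ≤ n) (σ : ℝ) (hσ : 0 < σ)
    (t : ℝ) (ht0 : 0 ≤ t) (ht1 : t ≤ 1) :
    (∫ x in (0 : ℝ)..(t * min σ 1), x ^ (n - 1) * Real.exp (-x ^ 2 / (2 * σ ^ 2))) ≤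
      t * ∫ x in (0 : ℝ)..(min σ 1), x ^ (n - 1) * Real.exp (-x ^ 2 / (2 * σ ^ 2)) := by
  have hmode : 1 ≤ √(n - 1 : ℕ) := Real.one_le_sqrt.2 (mod_cast Nat.le_sub_one_of_lt hn)
  exact gaussian_radial_convexity_general (n - 1) hσ (by positivity)
    ((min_le_left σ 1).trans (le_mul_of_one_le_left hσ.le hmode)) ht0 ht1
end

section
/- Let R₁ > 0, σ > 0, γ ∈ ℝ, and 0 < α ≤ 1/2. Then for every interval [ℓ,u] ⊆ [−R₁, R₁], (∫_ℓ^u e^{γt} e^{−t²(1+α)/(2σ²)} dt) · (∫_ℓ^u e^{γt} e^{−t²(1−α)/(2σ²)} dt) ≤ exp(2·R₁²·α²/σ²) · (∫_ℓ^u e^{γt} e^{−t²/(2σ²)} dt)². -/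
open MeasureTheory intervalIntegral

/-!
Write each product of two integrals over `[ℓ, u]` as an integral over the square `[ℓ, u]²` and
slice the square along its antidiagonals, parametrised as `(m + d, m - d)` with `d` in an interval
symmetric about `0`. On the slice through `(m, m)`, completing the square in `d` turns the
left-hand integrand into a multiple of a Gaussian in `d + α * m`, and the right-hand one into a
multiple of the same Gaussian in `d`. A symmetric interval carries more mass of a centred Gaussian
than of its translates, and the multiples differ by the factor `exp (m ^ 2 * α ^ 2 / σ ^ 2)`,
where `|m| ≤ R₁`.
-/

section SymmetricUnimodal

variable {f : ℝ → ℝ}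

theorem le_of_abs_le_of_even_of_antitoneOn (heven : f.Even)
    (hanti : AntitoneOn f (Set.Ici 0)) {x y : ℝ} (hxy : |x| ≤ |y|) : f y ≤ f x := by
  have apply_abs (z : ℝ) : f |z| = f z := by
    rcases abs_choice z with h | h <;> simp only [h, heven.eq]
  simpa only [apply_abs] using hanti (abs_nonneg x) (abs_nonneg y) hxy

theorem intervalIntegrable_of_even_of_antitoneOn (heven : f.Even)
    (hanti : AntitoneOn f (Set.Ici 0)) (a b : ℝ) : IntervalIntegrable f volume a b :=
  intervalIntegrable_of_even (fun x => (heven x).symm) fun x hx => by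
    refine (hanti.mono ?_).intervalIntegrable
    rw [Set.uIcc_of_le hx.le]
    exact Set.Icc_subset_Ici_self

theorem integral_comp_add_right_le_of_even_of_antitoneOn_of_nonneg (heven : f.Even)
    (hanti : AntitoneOn f (Set.Ici 0)) {a w : ℝ} (ha : 0 ≤ a) (hw : 0 ≤ w) :
    ∫ d in -w..w, f (d + a) ≤ ∫ d in -w..w, f d := by
  have hint := intervalIntegrable_of_even_of_antitoneOn heven hanti
  have hint_shift (c : ℝ) : IntervalIntegrable (fun x => f (x + c)) volume 0 a := by
    simpa using (hint c (a + c)).comp_add_right c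
  have hcompare : ∫ x in 0..a, f (x + w) ≤ ∫ x in 0..a, f (x + -w) :=
    integral_mono_on ha (hint_shift w) (hint_shift (-w)) fun x hx => by
      refine le_of_abs_le_of_even_of_antitoneOn heven hanti (sq_le_sq.1 ?_)
      nlinarith [mul_nonneg hx.1 hw]
  have hdiff := integral_interval_sub_interval_comm (hint (-w) w) (hint (-w + a) (w + a))
    (hint (-w) (-w + a))
  simp only [integral_comp_add_right, zero_add] at hcompare ⊢
  rw [add_comm a w, add_comm a (-w)] at hcompare
  linarith

/-- The one-dimensional case of Anderson's inequality. -/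
theorem integral_comp_add_right_le_of_even_of_antitoneOn (heven : f.Even)
    (hanti : AntitoneOn f (Set.Ici 0)) (a : ℝ) {w : ℝ} (hw : 0 ≤ w) :
    ∫ d in -w..w, f (d + a) ≤ ∫ d in -w..w, f d := by
  rcases le_total 0 a with ha | ha
  · exact integral_comp_add_right_le_of_even_of_antitoneOn_of_nonneg heven hanti ha hw
  · calc ∫ d in -w..w, f (d + a) = ∫ d in -w..w, f (-d + a) := by
          rw [integral_comp_neg fun d => f (d + a), neg_neg]
      _ = ∫ d in -w..w, f (d + -a) := by
          refine integral_congr fun d _ => ?_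
          rw [← heven.eq, neg_add, neg_neg]
      _ ≤ ∫ d in -w..w, f d :=
          integral_comp_add_right_le_of_even_of_antitoneOn_of_nonneg heven hanti
            (neg_nonneg.2 ha) hw

end SymmetricUnimodal

section Antidiagonal

open scoped Convolution

variable {f g : ℝ → ℝ} {ℓ u : ℝ}

theorem convolution_mul_two_mul (f g : ℝ → ℝ) (m : ℝ) :
    (f ⋆[ContinuousLinearMap.mul ℝ ℝ] g) (2 * m) = ∫ d, f (m + d) * g (m - d) := by
  rw [convolution_def, ← integral_add_left_eq_self _ m]
  refine integral_congr_ae (.of_forall fun d => ?_)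
  simp only [ContinuousLinearMap.mul_apply', show 2 * m - (m + d) = m - d by ring]

/-- Half the length of the antidiagonal slice `{d | (m + d, m - d) ∈ [ℓ, u]²}` of a square, which is
an interval symmetric about `0`. The value is negative when the slice is empty. -/
def sliceHalfWidth (ℓ u m : ℝ) : ℝ :=
  min (u - m) (m - ℓ)

theorem sliceHalfWidth_nonneg_iff {m : ℝ} : 0 ≤ sliceHalfWidth ℓ u m ↔ m ∈ Set.Icc ℓ u := by
  rw [sliceHalfWidth, le_min_iff, sub_nonneg, sub_nonneg, and_comm, Set.mem_Icc]

theorem mem_Icc_sliceHalfWidth_iff {m d : ℝ} :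
    d ∈ Set.Icc (-sliceHalfWidth ℓ u m) (sliceHalfWidth ℓ u m) ↔
      m + d ∈ Set.Icc ℓ u ∧ m - d ∈ Set.Icc ℓ u := by
  simp only [sliceHalfWidth, Set.mem_Icc, neg_le, le_min_iff]
  grind

theorem convolution_indicator_Icc_two_mul (f g : ℝ → ℝ) (ℓ u m : ℝ) :
    ((Set.Icc ℓ u).indicator f ⋆[ContinuousLinearMap.mul ℝ ℝ] (Set.Icc ℓ u).indicator g) (2 * m) =
      (Set.Icc ℓ u).indicator (fun m => ∫ d in -sliceHalfWidth ℓ u m..sliceHalfWidth ℓ u m,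
        f (m + d) * g (m - d)) m := by
  have hslice (d : ℝ) : (Set.Icc ℓ u).indicator f (m + d) * (Set.Icc ℓ u).indicator g (m - d) =
      (Set.Icc (-sliceHalfWidth ℓ u m) (sliceHalfWidth ℓ u m)).indicator
        (fun d => f (m + d) * g (m - d)) d := by
    classical
    simp only [Set.indicator_apply, mem_Icc_sliceHalfWidth_iff, ite_zero_mul_ite_zero]
  simp only [convolution_mul_two_mul, hslice]
  rw [MeasureTheory.integral_indicator measurableSet_Icc]
  by_cases hm : m ∈ Set.Icc ℓ u
  · have hw := sliceHalfWidth_nonneg_iff.2 hm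
    rw [Set.indicator_of_mem hm, integral_of_le (neg_le_self hw), integral_Icc_eq_integral_Ioc]
  · have hw : sliceHalfWidth ℓ u m < 0 := not_le.1 (mt sliceHalfWidth_nonneg_iff.1 hm)
    rw [Set.indicator_of_notMem hm, Set.Icc_eq_empty (by linarith), setIntegral_empty]

theorem integrable_indicator_Icc (hlu : ℓ ≤ u) (hf : IntervalIntegrable f volume ℓ u) :
    Integrable ((Set.Icc ℓ u).indicator f) :=
  (integrable_indicator_iff measurableSet_Icc).2
    ((intervalIntegrable_iff_integrableOn_Icc_of_le hlu).1 hf)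

theorem integral_indicator_Icc (f : ℝ → ℝ) (hlu : ℓ ≤ u) :
    ∫ t, (Set.Icc ℓ u).indicator f t = ∫ t in ℓ..u, f t := by
  rw [integral_of_le hlu, MeasureTheory.integral_indicator measurableSet_Icc,
    integral_Icc_eq_integral_Ioc]

theorem intervalIntegrable_antidiagonal (hlu : ℓ ≤ u) (hf : IntervalIntegrable f volume ℓ u)
    (hg : IntervalIntegrable g volume ℓ u) :
    IntervalIntegrable (fun m => ∫ d in -sliceHalfWidth ℓ u m..sliceHalfWidth ℓ u m,
      f (m + d) * g (m - d)) volume ℓ u := by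
  rw [intervalIntegrable_iff_integrableOn_Icc_of_le hlu,
    ← integrable_indicator_iff measurableSet_Icc]
  have hconv := (integrable_indicator_Icc hlu hf).integrable_convolution
    (ContinuousLinearMap.mul ℝ ℝ) (integrable_indicator_Icc hlu hg)
  simpa only [convolution_indicator_Icc_two_mul] using hconv.comp_mul_left' two_ne_zero

theorem integral_mul_integral_eq_antidiagonal (hlu : ℓ ≤ u) (hf : IntervalIntegrable f volume ℓ u)
    (hg : IntervalIntegrable g volume ℓ u) :
    (∫ t in ℓ..u, f t) * (∫ t in ℓ..u, g t) =
      2 * ∫ m in ℓ..u, ∫ d in -sliceHalfWidth ℓ u m..sliceHalfWidth ℓ u m,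
        f (m + d) * g (m - d) := by
  let F := (Set.Icc ℓ u).indicator f
  let G := (Set.Icc ℓ u).indicator g
  calc (∫ t in ℓ..u, f t) * (∫ t in ℓ..u, g t)
      = ∫ z, (F ⋆[ContinuousLinearMap.mul ℝ ℝ] G) z := by
        rw [integral_convolution _ (integrable_indicator_Icc hlu hf)
          (integrable_indicator_Icc hlu hg), ContinuousLinearMap.mul_apply',
          integral_indicator_Icc f hlu, integral_indicator_Icc g hlu]
    _ = 2 * ∫ m, (F ⋆[ContinuousLinearMap.mul ℝ ℝ] G) (2 * m) := by
        rw [Measure.integral_comp_mul_left, abs_of_pos (by norm_num), smul_eq_mul,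
          mul_inv_cancel_left₀ two_ne_zero]
    _ = _ := by
        simp only [F, G, convolution_indicator_Icc_two_mul, integral_indicator_Icc _ hlu]

theorem integral_mul_integral_le_of_antidiagonal_le {p q r s : ℝ → ℝ} {C : ℝ} (hlu : ℓ ≤ u)
    (hp : IntervalIntegrable p volume ℓ u) (hq : IntervalIntegrable q volume ℓ u)
    (hr : IntervalIntegrable r volume ℓ u) (hs : IntervalIntegrable s volume ℓ u)
    (hslice : ∀ m ∈ Set.Icc ℓ u,
      ∫ d in -sliceHalfWidth ℓ u m..sliceHalfWidth ℓ u m, p (m + d) * q (m - d) ≤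
        C * ∫ d in -sliceHalfWidth ℓ u m..sliceHalfWidth ℓ u m, r (m + d) * s (m - d)) :
    (∫ t in ℓ..u, p t) * (∫ t in ℓ..u, q t) ≤ C * ((∫ t in ℓ..u, r t) * ∫ t in ℓ..u, s t) := by
  have hmono := integral_mono_on hlu (intervalIntegrable_antidiagonal hlu hp hq)
    ((intervalIntegrable_antidiagonal hlu hr hs).const_mul C) hslice
  rw [intervalIntegral.integral_const_mul] at hmono
  rw [integral_mul_integral_eq_antidiagonal hlu hp hq,
    integral_mul_integral_eq_antidiagonal hlu hr hs, mul_left_comm]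
  gcongr

end Antidiagonal

theorem even_exp_neg_sq_div (σ : ℝ) : (fun d : ℝ => Real.exp (-d ^ 2 / σ ^ 2)).Even :=
  fun d => by simp only [neg_sq]

theorem antitoneOn_exp_neg_sq_div (σ : ℝ) :
    AntitoneOn (fun d : ℝ => Real.exp (-d ^ 2 / σ ^ 2)) (Set.Ici 0) := by
  intro x hx y _ hxy
  have : 0 ≤ x := hx
  dsimp only
  gcongr

theorem tilted_gaussian_mul_reflect {σ : ℝ} (hσ : σ ≠ 0) (γ α m d : ℝ) :
    Real.exp (γ * (m + d)) * Real.exp (-(m + d) ^ 2 * (1 + α) / (2 * σ ^ 2)) *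
      (Real.exp (γ * (m - d)) * Real.exp (-(m - d) ^ 2 * (1 - α) / (2 * σ ^ 2))) =
    Real.exp (m ^ 2 * α ^ 2 / σ ^ 2) * Real.exp (2 * γ * m - m ^ 2 / σ ^ 2) *
      Real.exp (-(d + α * m) ^ 2 / σ ^ 2) := by
  simp only [← Real.exp_add]
  congr 1
  field_simp
  ring

theorem integral_tilted_gaussian_mul_reflect_le {σ : ℝ} (hσ : σ ≠ 0) (γ α m : ℝ)
    {w : ℝ} (hw : 0 ≤ w) :
    ∫ d in -w..w, Real.exp (γ * (m + d)) * Real.exp (-(m + d) ^ 2 * (1 + α) / (2 * σ ^ 2)) *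
      (Real.exp (γ * (m - d)) * Real.exp (-(m - d) ^ 2 * (1 - α) / (2 * σ ^ 2))) ≤
    Real.exp (m ^ 2 * α ^ 2 / σ ^ 2) *
      ∫ d in -w..w, Real.exp (γ * (m + d)) * Real.exp (-(m + d) ^ 2 / (2 * σ ^ 2)) *
        (Real.exp (γ * (m - d)) * Real.exp (-(m - d) ^ 2 / (2 * σ ^ 2))) := by
  have huntilted (d : ℝ) : Real.exp (γ * (m + d)) * Real.exp (-(m + d) ^ 2 / (2 * σ ^ 2)) *
      (Real.exp (γ * (m - d)) * Real.exp (-(m - d) ^ 2 / (2 * σ ^ 2))) =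
      Real.exp (2 * γ * m - m ^ 2 / σ ^ 2) * Real.exp (-d ^ 2 / σ ^ 2) := by
    simpa using tilted_gaussian_mul_reflect hσ γ 0 m d
  simp only [tilted_gaussian_mul_reflect hσ, huntilted, intervalIntegral.integral_const_mul,
    mul_assoc]
  gcongr
  exact integral_comp_add_right_le_of_even_of_antitoneOn (even_exp_neg_sq_div σ)
    (antitoneOn_exp_neg_sq_div σ) (α * m) hw

theorem needle_inequality_general
    (R₁ σ γ α : ℝ) (hσ : σ ≠ 0) (ℓ u : ℝ) (hℓ : -R₁ ≤ ℓ) (hlu : ℓ ≤ u) (hu : u ≤ R₁) :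
    (∫ t in ℓ..u, Real.exp (γ * t) * Real.exp (-t ^ 2 * (1 + α) / (2 * σ ^ 2))) *
      (∫ t in ℓ..u, Real.exp (γ * t) * Real.exp (-t ^ 2 * (1 - α) / (2 * σ ^ 2))) ≤
    Real.exp (R₁ ^ 2 * α ^ 2 / σ ^ 2) *
      (∫ t in ℓ..u, Real.exp (γ * t) * Real.exp (-t ^ 2 / (2 * σ ^ 2))) ^ 2 := by
  have hint {φ : ℝ → ℝ} (hφ : Continuous φ) : IntervalIntegrable φ volume ℓ u :=
    hφ.intervalIntegrable ℓ u
  rw [sq (∫ t in ℓ..u, _)]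
  refine integral_mul_integral_le_of_antidiagonal_le hlu (hint (by fun_prop)) (hint (by fun_prop))
    (hint (by fun_prop)) (hint (by fun_prop)) fun m hm => ?_
  have hw := sliceHalfWidth_nonneg_iff.2 hm
  have hm_sq : m ^ 2 ≤ R₁ ^ 2 := sq_le_sq' (hℓ.trans hm.1) (hm.2.trans hu)
  refine (integral_tilted_gaussian_mul_reflect_le hσ γ α m hw).trans ?_
  gcongr
  exact integral_nonneg (neg_le_self hw) fun d _ => by positivity

/-- Core one-dimensional needle inequality: for `[ℓ,u] ⊆ [-R₁,R₁]`, any `γ`,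
and `0 < α ≤ 1/2`,
`(∫ e^{γt}e^{-t²(1+α)/(2σ²)})·(∫ e^{γt}e^{-t²(1-α)/(2σ²)}) ≤
 exp(2R₁²α²/σ²)·(∫ e^{γt}e^{-t²/(2σ²)})²`. -/
theorem needle_inequality
    (R₁ σ γ α : ℝ) (hR : 0 < R₁) (hσ : 0 < σ) (hα0 : 0 < α) (hα : α ≤ 1 / 2)
    (ℓ u : ℝ) (hℓ : -R₁ ≤ ℓ) (hlu : ℓ ≤ u) (hu : u ≤ R₁) :
    (∫ t in ℓ..u, Real.exp (γ * t) * Real.exp (-t ^ 2 * (1 + α) / (2 * σ ^ 2))) *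
      (∫ t in ℓ..u, Real.exp (γ * t) * Real.exp (-t ^ 2 * (1 - α) / (2 * σ ^ 2))) ≤
    Real.exp (2 * R₁ ^ 2 * α ^ 2 / σ ^ 2) *
      (∫ t in ℓ..u, Real.exp (γ * t) * Real.exp (-t ^ 2 / (2 * σ ^ 2))) ^ 2 := by
  refine (needle_inequality_general R₁ σ γ α hσ.ne' ℓ u hℓ hlu hu).trans ?_
  gcongr
  exact le_mul_of_one_le_left (sq_nonneg R₁) one_le_two
end
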